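/- Assume in addition that P satisfies the Jacobi identity P(f,P(g,h)) + P(g,P(h,f)) + P(h,P(f,g)) = 0 for all f,g,h ∈ R, and that each P(x_i,x_j) has zero constant term. Let r denote the rank, over the field of fractions ℂ(x₁,…,x_n), of the n×n antisymmetric matrix (L_{ij}) (so r is even). Let φ₁,…,φ_n ∈ R be nonzero polynomials such that for all i,j there exist λ_{ij} ∈ ℂ with P(φ_i,φ_j) = λ_{ij}·φ_i·φ_j, and such that D = det((∂φ_i/∂x_j)_{i,j}) is nonzero. Then 2·(n + ord(D) − Σ_{i=1}^n ord(φ_i)) ≥ r. (In other words, the degree of the lowest degree term of the log-volume form μ_Φ = dlogφ₁∧⋯∧dlogφ_n at the origin is at least half the rank of the linearized Poisson structure.) -/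

import Mathlib

/-!
# Lowest degree of a log-volume form

The argument is a degeneration to the tangent cone at the origin. Substituting `xᵢ ↦ t xᵢ` gives a
ring map `scaleHom : R → R[t]` whose `t^k`-coefficient is the degree `k` component
(`coeff_scaleHom`). Put `dᵢ = ord φᵢ`. Since `∂ₐφᵢ` has order at least `dᵢ - 1`, there is a matrix
`M` over `R[t]` with `t · (∂ₐφᵢ)(t x) = t ^ dᵢ · Mᵢₐ`, and `M(0)` is the Jacobian matrix of the lowest
degree terms. Likewise `P(xₐ, x_b)(t x) = t · Q_{ab}` with `Q(0) = L`.

* Scaling `P(φᵢ, φⱼ) = λᵢⱼ φᵢ φⱼ` and cancelling `t ^ (dᵢ + dⱼ + 1)` leaves a multiple of `t` on the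
  right, so `M(0) L M(0)ᵀ = 0`: the lowest degree terms commute under the linearized bracket. The row
  space of `M(0)` is therefore isotropic for a form of rank `r`, and
  `2 · rank M(0) + r ≤ 2n` (`two_mul_rank_add_rank_le`).
* `det M` is divisible by `t ^ (n - rank M(0))` over the fraction field
  (`X_pow_corank_dvd_det`), while `t ^ n · D(t x) = t ^ (∑ dᵢ) · det M` shows that its exact order
  in `t` is `n + ord D - ∑ dᵢ`.

Combining the two, `n + ord D - ∑ dᵢ ≥ n - rank M(0) ≥ r / 2`.
-/

open MvPolynomial

/-- The order of a polynomial: the minimal total degree of a nonzero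
homogeneous component. -/
noncomputable def mvOrd {σ : Type*} (f : MvPolynomial σ ℂ) : ℕ :=
  sInf {d : ℕ | MvPolynomial.homogeneousComponent d f ≠ 0}

/-- The lowest degree term of a polynomial: its nonzero homogeneous component
of minimal total degree. -/
noncomputable def mvLow {σ : Type*} (f : MvPolynomial σ ℂ) : MvPolynomial σ ℂ :=
  MvPolynomial.homogeneousComponent (mvOrd f) f

open Matrix

/-- The substitution `xᵢ ↦ t xᵢ`, where `t` is the polynomial variable. -/
noncomputable def scaleHom (n : ℕ) :
    MvPolynomial (Fin n) ℂ →+* Polynomial (MvPolynomial (Fin n) ℂ) :=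
  eval₂Hom (Polynomial.C.comp C) (fun i => Polynomial.C (X i) * Polynomial.X)

theorem scaleHom_monomial (n : ℕ) (s : Fin n →₀ ℕ) (a : ℂ) :
    scaleHom n (monomial s a) = Polynomial.C (monomial s a) * Polynomial.X ^ s.degree := by
  rw [scaleHom, coe_eval₂Hom, eval₂_monomial, monomial_eq (a := a), Finsupp.prod, Finsupp.prod]
  simp only [mul_pow, Finset.prod_mul_distrib, Finset.prod_pow_eq_pow_sum, map_mul, map_prod,
    map_pow, RingHom.comp_apply, Finsupp.degree_apply, mul_assoc]

theorem coeff_scaleHom (n : ℕ) (f : MvPolynomial (Fin n) ℂ) (k : ℕ) :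
    (scaleHom n f).coeff k = homogeneousComponent k f := by
  induction f using MvPolynomial.induction_on' with
  | monomial s a =>
    rw [scaleHom_monomial, Polynomial.coeff_C_mul_X_pow,
      homogeneousComponent_of_mem (isHomogeneous_monomial a rfl)]
  | add p q hp hq => simp [hp, hq]

theorem homogeneousComponent_of_lt_mvOrd {n : ℕ} {f : MvPolynomial (Fin n) ℂ} {k : ℕ}
    (h : k < mvOrd f) : homogeneousComponent k f = 0 := by
  by_contra hk
  exact Nat.notMem_of_lt_sInf h hk

theorem mvLow_ne_zero {n : ℕ} {f : MvPolynomial (Fin n) ℂ} (hf : f ≠ 0) :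
    homogeneousComponent (mvOrd f) f ≠ 0 := by
  have hne : {d : ℕ | homogeneousComponent d f ≠ 0}.Nonempty := by
    by_contra h
    rw [Set.not_nonempty_iff_eq_empty, Set.eq_empty_iff_forall_notMem] at h
    apply hf
    rw [← sum_homogeneousComponent f]
    exact Finset.sum_eq_zero fun i _ => not_not.mp (h i)
  exact Nat.sInf_mem hne

theorem X_pow_mvOrd_dvd_scaleHom {n : ℕ} (f : MvPolynomial (Fin n) ℂ) :
    Polynomial.X ^ mvOrd f ∣ scaleHom n f := by
  rw [Polynomial.X_pow_dvd_iff]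
  intro k hk
  rw [coeff_scaleHom, homogeneousComponent_of_lt_mvOrd hk]

/-- A partial derivative lowers the order by at most one. -/
theorem X_pow_mvOrd_dvd_X_mul_scaleHom_pderiv {n : ℕ} (f : MvPolynomial (Fin n) ℂ) (a : Fin n) :
    Polynomial.X ^ mvOrd f ∣ Polynomial.X * scaleHom n (pderiv a f) := by
  rw [Polynomial.X_pow_dvd_iff]
  intro k hk
  cases k with
  | zero => simp
  | succ k =>
    rw [Polynomial.coeff_X_mul, coeff_scaleHom]
    ext m
    rw [coeff_homogeneousComponent, coeff_pderiv]
    split_ifs with hm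
    · have h := congrArg (coeff (m + Finsupp.single a 1)) (homogeneousComponent_of_lt_mvOrd hk)
      rw [coeff_homogeneousComponent, if_pos (by simp [hm])] at h
      simp [h]
    · simp

/-- The power of `t` dividing the scaled polynomial `f(t x)` is at most the order of `f`, because
the coefficient of `t ^ ord f` is the lowest degree term. -/
theorem le_mvOrd_of_X_pow_dvd {n : ℕ} {f : MvPolynomial (Fin n) ℂ} (hf : f ≠ 0) {k : ℕ}
    (h : Polynomial.X ^ k ∣ scaleHom n f) : k ≤ mvOrd f := by
  by_contra hk
  apply mvLow_ne_zero hf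
  rw [← coeff_scaleHom]
  exact Polynomial.X_pow_dvd_iff.mp h _ (not_le.mp hk)

/-- The row space of `A` is totally isotropic for the form `L`, so twice its dimension is at most
`n` plus the dimension of the radical of `L`. -/
theorem two_mul_rank_add_rank_le {K : Type*} [Field K] {n : ℕ} (A L : Matrix (Fin n) (Fin n) K)
    (h : A * L * Aᵀ = 0) : 2 * A.rank + L.rank ≤ 2 * n := by
  -- Sylvester's inequality `rank A + rank L ≤ n + rank (A * L)`: `L` maps `ker (A * L)` to `ker A`.
  have hsyl : A.rank + L.rank ≤ n + (A * L).rank := by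
    let f := L.mulVecLin.domRestrict (LinearMap.ker (A * L).mulVecLin)
    have h1 := f.finrank_range_add_finrank_ker
    have h2 : Module.finrank K (LinearMap.range f) ≤
        Module.finrank K (LinearMap.ker A.mulVecLin) := by
      apply Submodule.finrank_mono
      rintro _ ⟨⟨v, hv⟩, rfl⟩
      simpa [f] using hv
    have h3 : Module.finrank K (LinearMap.ker f) ≤
        Module.finrank K (LinearMap.ker L.mulVecLin) := by
      rw [LinearMap.ker_domRestrict]
      exact LinearMap.finrank_le_finrank_of_injective
        (f := ((Submodule.subtype _).restrict (p := (LinearMap.ker L.mulVecLin).submoduleOf _)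
          (q := LinearMap.ker L.mulVecLin) (fun x hx => hx)))
        (fun x y hxy => by
          apply Subtype.ext
          apply Subtype.ext
          have h := congrArg Subtype.val hxy
          exact h)
    have h4 := A.mulVecLin.finrank_range_add_finrank_ker
    have h5 := L.mulVecLin.finrank_range_add_finrank_ker
    have h6 := (A * L).mulVecLin.finrank_range_add_finrank_ker
    simp only [Module.finrank_fin_fun] at h4 h5 h6
    simp only [Matrix.rank]
    omega
  have h0 := rank_add_rank_le_card_of_mul_eq_zero h
  rw [rank_transpose, Fintype.card_fin] at h0
  omega

/-- A polynomial matrix whose value at `0` has corank `c` has determinant divisible by `X ^ c`: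
row and column operations make the value at `0` diagonal, and then `c` rows are divisible
by `X`. -/
theorem X_pow_corank_dvd_det {K : Type*} [Field K] {n : ℕ}
    (M : Matrix (Fin n) (Fin n) (Polynomial K)) :
    Polynomial.X ^ (n - (M.map (Polynomial.coeff · 0)).rank) ∣ M.det := by
  classical
  obtain ⟨l, l', D, hD⟩ := Pivot.exists_list_transvec_mul_mul_list_transvec_eq_diagonal
    (M.map (Polynomial.coeff · 0))
  set A := M.map (Polynomial.coeff · 0) with hA
  set U := (l.map TransvectionStruct.toMatrix).prod with hU
  set V := (l'.map TransvectionStruct.toMatrix).prod with hV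
  have hUdet : U.det = 1 := TransvectionStruct.det_toMatrix_prod l
  have hVdet : V.det = 1 := TransvectionStruct.det_toMatrix_prod l'
  have hrank : A.rank = Fintype.card {i // D i ≠ 0} := by
    rw [← rank_diagonal, ← hD, rank_mul_eq_left_of_isUnit_det _ _ (by simp [hVdet]),
      rank_mul_eq_right_of_isUnit_det _ _ (by simp [hUdet])]
  let N := U.map Polynomial.C * M * V.map Polynomial.C
  have hNdet : N.det = M.det := by
    have hu : (U.map Polynomial.C).det = 1 := by
      rw [← RingHom.mapMatrix_apply, ← RingHom.map_det, hUdet, map_one]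
    have hv : (V.map Polynomial.C).det = 1 := by
      rw [← RingHom.mapMatrix_apply, ← RingHom.map_det, hVdet, map_one]
    simp [N, det_mul, hu, hv]
  have hN0 : ∀ i j, (N i j).coeff 0 = diagonal D i j := by
    intro i j
    rw [← hD]
    simp [N, A, Matrix.mul_apply, Polynomial.finsetSum_coeff, Polynomial.mul_coeff_zero]
  have hdvd : ∀ i j, (if D i = 0 then Polynomial.X else 1 : Polynomial K) ∣ N i j := by
    intro i j
    split_ifs with hi
    · rw [Polynomial.X_dvd_iff, hN0, diagonal_apply]
      simp [hi]
    · exact one_dvd _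
  choose N' hN' using hdvd
  have hNeq : N = of fun i j => (if D i = 0 then Polynomial.X else 1 : Polynomial K) *
      (of N') i j := by
    ext1 i j
    exact hN' i j
  have hcard : n - A.rank = (Finset.univ.filter fun i => D i = 0).card := by
    have := Finset.card_filter_add_card_filter_not (s := (Finset.univ : Finset (Fin n)))
      (fun i => D i = 0)
    rw [hrank, Fintype.card_subtype]
    simp only [Finset.card_univ, Fintype.card_fin] at this
    simp only [ne_eq]
    omega
  rw [← hNdet, hNeq, det_mul_column, hcard, Finset.prod_ite]
  simp

/-- An antisymmetric biderivation is determined by its values on the coordinates. -/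
theorem bracket_eq_sum {n : ℕ}
    (P : MvPolynomial (Fin n) ℂ → MvPolynomial (Fin n) ℂ → MvPolynomial (Fin n) ℂ)
    (hadd : ∀ a b c, P (a + b) c = P a c + P b c)
    (hsmul : ∀ (r : ℂ) (a b), P (r • a) b = r • P a b)
    (hskew : ∀ a b, P a b = - P b a)
    (hleib : ∀ a b c, P (a * b) c = a * P b c + b * P a c)
    (f g : MvPolynomial (Fin n) ℂ) :
    P f g = ∑ a, ∑ b, pderiv a f * pderiv b g * P (X a) (X b) := by
  have key : ∀ f g, P f g = ∑ a, pderiv a f * P (X a) g := by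
    intro f g
    let δ : Derivation ℂ (MvPolynomial (Fin n) ℂ) (MvPolynomial (Fin n) ℂ) :=
      Derivation.mk' { toFun := fun f => P f g
                       map_add' := fun a b => hadd a b g
                       map_smul' := fun r a => hsmul r a g } (fun a b => hleib a b g)
    have hsum : ∀ h, (∑ a, P (X a) g • pderiv a : Derivation ℂ (MvPolynomial (Fin n) ℂ)
        (MvPolynomial (Fin n) ℂ)) h = ∑ a, P (X a) g * pderiv a h := by
      intro h
      have h1 := congrFun (map_sum (Derivation.coeFnAddMonoidHom (R := ℂ)
        (A := MvPolynomial (Fin n) ℂ) (M := MvPolynomial (Fin n) ℂ))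
        (fun a => P (X a) g • pderiv a) Finset.univ) h
      rw [Finset.sum_apply] at h1
      exact h1
    have hδ : δ = ∑ a, P (X a) g • pderiv a := by
      apply derivation_ext
      intro i
      rw [hsum]
      simp [δ, pderiv_X, Pi.single_apply]
    rw [show P f g = δ f from rfl, hδ, hsum]
    exact Finset.sum_congr rfl fun a _ => mul_comm _ _
  rw [key f g]
  refine Finset.sum_congr rfl fun a _ => ?_
  rw [hskew, key g (X a), ← Finset.sum_neg_distrib, Finset.mul_sum]
  refine Finset.sum_congr rfl fun b _ => ?_
  rw [hskew (X b) (X a)]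
  ring

/-- for a Poisson bracket `P` (bilinear, antisymmetric, a
derivation in each argument, satisfying the Jacobi identity, with brackets of
generators having zero constant term), any log-canonical system
`φ₁,…,φ_n` with nonzero Jacobian satisfies
`2·(n + ord(D) − Σ ord(φ_i)) ≥ r`, where `r` is the rank over `ℂ(x₁,…,x_n)`
of the matrix `(L_{ij})` of degree-1 components of `P(x_i,x_j)`. -/
theorem log_volume_form_lowest_degree_ge_half_rank
    (n : ℕ)
    (P : MvPolynomial (Fin n) ℂ → MvPolynomial (Fin n) ℂ → MvPolynomial (Fin n) ℂ)
    (hadd : ∀ a b c, P (a + b) c = P a c + P b c)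
    (hsmul : ∀ (r : ℂ) (a b), P (r • a) b = r • P a b)
    (hskew : ∀ a b, P a b = - P b a)
    (hleib : ∀ a b c, P (a * b) c = a * P b c + b * P a c)
    (hjacobi : ∀ f g h, P f (P g h) + P g (P h f) + P h (P f g) = 0)
    (hconst : ∀ i j, constantCoeff (P (X i) (X j)) = 0)
    (r : ℕ)
    (hr : r = ((Matrix.of fun i j : Fin n =>
        homogeneousComponent 1 (P (X i) (X j))).map
          (algebraMap (MvPolynomial (Fin n) ℂ)
            (FractionRing (MvPolynomial (Fin n) ℂ)))).rank)
    (φ : Fin n → MvPolynomial (Fin n) ℂ) (hφ : ∀ i, φ i ≠ 0)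
    (lam : Fin n → Fin n → ℂ)
    (hlam : ∀ i j, P (φ i) (φ j) = C (lam i j) * φ i * φ j)
    (hD : Matrix.det (Matrix.of fun i j : Fin n => pderiv j (φ i)) ≠ 0) :
    (r : ℤ) ≤ 2 * ((n : ℤ)
        + (mvOrd (Matrix.det (Matrix.of fun i j : Fin n => pderiv j (φ i))) : ℤ)
        - ∑ i : Fin n, (mvOrd (φ i) : ℤ)) := by
  classical
  -- `M` is the rescaled Jacobian matrix and `Q` the rescaled matrix of the bracket.
  choose M hM using fun i a => X_pow_mvOrd_dvd_X_mul_scaleHom_pderiv (φ i) a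
  choose Φ hΦ using fun i => X_pow_mvOrd_dvd_scaleHom (φ i)
  have hQ : ∀ a b, Polynomial.X ∣ scaleHom n (P (X a) (X b)) := by
    intro a b
    rw [Polynomial.X_dvd_iff, coeff_scaleHom, homogeneousComponent_zero, ← constantCoeff_eq,
      hconst, C_0]
  choose Q hQ using hQ
  have hQ0 : ∀ a b, (Q a b).coeff 0 = homogeneousComponent 1 (P (X a) (X b)) := by
    intro a b
    rw [← coeff_scaleHom, hQ, Polynomial.coeff_X_mul]
  have hMQ : ∀ i j, ∑ a, ∑ b, M i a * M j b * Q a b =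
      Polynomial.X * (scaleHom n (C (lam i j)) * Φ i * Φ j) := by
    intro i j
    have h := congrArg (scaleHom n) (hlam i j)
    rw [bracket_eq_sum P hadd hsmul hskew hleib] at h
    simp only [map_sum, map_mul] at h
    have h0 : (Polynomial.X ^ (mvOrd (φ i) + mvOrd (φ j) + 1) :
        Polynomial (MvPolynomial (Fin n) ℂ)) ≠ 0 := pow_ne_zero _ Polynomial.X_ne_zero
    apply mul_left_cancel₀ h0
    calc _ = Polynomial.X ^ 2 * ∑ a, ∑ b, scaleHom n (pderiv a (φ i)) *
          scaleHom n (pderiv b (φ j)) * scaleHom n (P (X a) (X b)) := by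
          simp only [Finset.mul_sum]
          refine Finset.sum_congr rfl fun a _ => Finset.sum_congr rfl fun b _ => ?_
          rw [hQ]
          linear_combination
            (-(Polynomial.X * scaleHom n (pderiv b (φ j))) * (Polynomial.X * Q a b)) * hM i a
            - (Polynomial.X ^ mvOrd (φ i) * M i a * (Polynomial.X * Q a b)) * hM j b
      _ = _ := by
          rw [h, hΦ i, hΦ j]
          ring
  let ι := algebraMap (MvPolynomial (Fin n) ℂ) (FractionRing (MvPolynomial (Fin n) ℂ))
  have hι : Function.Injective ι := IsFractionRing.injective _ _
  let MK : Matrix (Fin n) (Fin n) (Polynomial (FractionRing (MvPolynomial (Fin n) ℂ))) :=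
    (of M).map (Polynomial.mapRingHom ι)
  let A := MK.map (Polynomial.coeff · 0)
  have hiso : A * ((of fun i j : Fin n => homogeneousComponent 1 (P (X i) (X j))).map ι) * Aᵀ
      = 0 := by
    ext i j
    have h := congrArg (fun p => ι (Polynomial.coeff p 0)) (hMQ i j)
    simp only [Polynomial.finsetSum_coeff, Polynomial.mul_coeff_zero, Polynomial.coeff_X_zero,
      zero_mul, map_zero, map_sum, map_mul, hQ0] at h
    rw [Matrix.zero_apply, ← h, Finset.sum_comm]
    simp only [Matrix.mul_apply, Matrix.transpose_apply, Matrix.map_apply, of_apply, A, MK,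
      Polynomial.coe_mapRingHom, Polynomial.coeff_map, Finset.sum_mul]
    refine Finset.sum_congr rfl fun b _ => Finset.sum_congr rfl fun a _ => ?_
    ring
  have hrank := two_mul_rank_add_rank_le A _ hiso
  have hArank : A.rank ≤ n := by simpa using A.rank_le_card_width
  set D := det (of fun i j : Fin n => pderiv j (φ i)) with hDdef
  have hdet : Polynomial.X ^ n * scaleHom n D =
      Polynomial.X ^ (∑ i, mvOrd (φ i)) * (of M).det := by
    rw [hDdef, RingHom.map_det, ← Finset.prod_pow_eq_pow_sum, ← det_mul_column]
    have hsm := det_smul ((scaleHom n).mapMatrix (of fun i j : Fin n => pderiv j (φ i)))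
      (Polynomial.X : Polynomial (MvPolynomial (Fin n) ℂ))
    rw [Fintype.card_fin] at hsm
    rw [← hsm]
    congr 1
    ext1 i j
    simpa using hM i j
  -- Divisibility by powers of `t` descends from the fraction field to `R[t]`.
  have hdvdM : Polynomial.X ^ (n - A.rank) ∣ (of M).det := by
    have h := X_pow_corank_dvd_det MK
    have hmap : MK.det = (of M).det.map ι := by
      rw [← Polynomial.coe_mapRingHom, RingHom.map_det]
      rfl
    rw [hmap, Polynomial.X_pow_dvd_iff] at h
    rw [Polynomial.X_pow_dvd_iff]
    intro k hk
    apply hι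
    rw [map_zero, ← Polynomial.coeff_map]
    exact h k hk
  have hle : ∑ i, mvOrd (φ i) + (n - A.rank) ≤ n + mvOrd D := by
    by_contra hlt
    have h1 : Polynomial.X ^ (n + (mvOrd D + 1)) ∣ Polynomial.X ^ n * scaleHom n D := by
      refine (pow_dvd_pow _ (show n + (mvOrd D + 1) ≤ ∑ i, mvOrd (φ i) + (n - A.rank) by
        omega)).trans ?_
      rw [hdet, pow_add]
      exact mul_dvd_mul_left _ hdvdM
    rw [pow_add] at h1
    have h2 := (mul_dvd_mul_iff_left (pow_ne_zero n Polynomial.X_ne_zero)).mp h1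
    have h3 := le_mvOrd_of_X_pow_dvd hD h2
    omega
  have hcast : (∑ i : Fin n, (mvOrd (φ i) : ℤ)) = ((∑ i, mvOrd (φ i) : ℕ) : ℤ) := by
    push_cast
    rfl
  rw [hcast]
  change r = Matrix.rank ((of fun i j : Fin n =>
    homogeneousComponent 1 (P (X i) (X j))).map ι) at hr
  rw [← hr] at hrank
  omega
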